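/- arXiv:1011.1338 — 9 statements merged into one kernel-verified Lean document; each statement's English description precedes it below -/
import Mathlib

section
/- Let v be a vote on a finite candidate set C and let Γ be a set of unordered pairs of distinct candidates. If two swap sequences starting from v each transpose exactly the pairs of Γ, each pair exactly once, then both sequences end at the same vote, namely the relation obtained from v by reversing the relative order of exactly the pairs in Γ (which is therefore again a strict linear order). In other words, the vote v^Γ obtained by applying an admissible set of swaps Γ is independent of the order in which the swaps are applied. -/
open Finset

/-- A vote on candidate set `C` with `m` candidates: a strict linear order on `C`,
given as a bijection mapping each candidate to its (0-based) position in `Fin m`,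
position `0` being the most preferred. -/
abbrev Vote (C : Type*) (m : ℕ) := C ≃ Fin m

/-- The rank of candidate `c` in vote `v`, an element of `{1, …, m}`;
rank 1 is the most preferred position. -/
def rankOf {C : Type*} {m : ℕ} (v : Vote C m) (c : C) : ℕ := (v c : ℕ) + 1

/-- `IsSwapSeq v l u` : the list `l` records a sequence of adjacent transpositions
transforming vote `v` into vote `u`; each list entry `(a, b)` is the (oriented)
pair of candidates being transposed, where `a` is ranked directly above `b`
in the current vote at the moment of the swap. -/
inductive IsSwapSeq {C : Type*} [DecidableEq C] {m : ℕ} :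
    Vote C m → List (C × C) → Vote C m → Prop
  | nil (v : Vote C m) : IsSwapSeq v [] v
  | cons (v : Vote C m) (a b : C) (l : List (C × C)) (u : Vote C m)
      (hadj : (v a : ℕ) + 1 = (v b : ℕ))
      (htail : IsSwapSeq ((Equiv.swap a b).trans v) l u) :
      IsSwapSeq v ((a, b) :: l) u

/-- Oriented representatives of the unordered pairs of candidates that are ranked
in opposite relative order by votes `v` and `u` (each discordant unordered pair
`{a,b}` is represented by the unique orientation with `a` preferred to `b` in `v`). -/
def discordantPairs {C : Type*} [Fintype C] [DecidableEq C] {m : ℕ}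
    (v u : Vote C m) : Finset (C × C) :=
  Finset.univ.filter fun p => v p.1 < v p.2 ∧ u p.2 < u p.1

/-- Effect of a single adjacent transposition on the relative orders. -/
theorem swap_step_lt {C : Type*} [DecidableEq C] {m : ℕ} (v : Vote C m) (a b : C)
    (hadj : (v a : ℕ) + 1 = (v b : ℕ)) (x y : C) (hxy : x ≠ y) :
    ((Equiv.swap a b).trans v x < (Equiv.swap a b).trans v y ↔
      if s(x, y) = s(a, b) then v y < v x else v x < v y) := by
  have key : ∀ p q : C, p ≠ q → (v p : ℕ) ≠ (v q : ℕ) := fun p q h e =>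
    h (v.injective (Fin.ext e))
  have h1 := key x y hxy
  have h2 := key x a
  have h3 := key x b
  have h4 := key y a
  have h5 := key y b
  simp only [Equiv.trans_apply, Equiv.swap_apply_def, Sym2.eq_iff, Fin.lt_def]
  grind

/-- A duplicate-free swap sequence reverses exactly the pairs it transposes. -/
theorem swapSeq_lt_iff {C : Type*} [DecidableEq C] {m : ℕ} {v u : Vote C m}
    {l : List (C × C)} (h : IsSwapSeq v l u)
    (hn : (l.map fun p => s(p.1, p.2)).Nodup) (x y : C) (hxy : x ≠ y) :
    (u x < u y ↔ if s(x, y) ∈ (l.map fun p => s(p.1, p.2)) then v y < v x else v x < v y) := by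
  induction h with
  | nil v => simp
  | cons v a b l u hadj htail ih =>
    rw [List.map_cons, List.nodup_cons] at hn
    rw [ih hn.2, swap_step_lt v a b hadj x y hxy, swap_step_lt v a b hadj y x hxy.symm,
      Sym2.eq_swap (a := y) (b := x)]
    simp only [List.map_cons, List.mem_cons]
    by_cases e : s(x, y) = s(a, b)
    · have : s(x, y) ∉ l.map fun p => s(p.1, p.2) := e ▸ hn.1
      rw [if_neg this, if_pos e, if_pos (Or.inl e)]
    · simp only [e, if_false, false_or]

/-- A vote is determined by its strict order. -/
theorem vote_ext_of_lt {C : Type*} {m : ℕ} (u w : Vote C m)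
    (h : ∀ a b : C, a ≠ b → (u a < u b ↔ w a < w b)) : u = w := by
  have hm : StrictMono (u.symm.trans w) := by
    intro i j hij
    have := (h (u.symm i) (u.symm j) (fun e => hij.ne (u.symm.injective e))).1 (by simpa using hij)
    simpa using this
  let e : Fin m ≃o Fin m := StrictMono.orderIsoOfSurjective _ hm (u.symm.trans w).surjective
  have he : e = OrderIso.refl _ := Subsingleton.elim _ _
  ext c
  have := congrArg (fun f : Fin m ≃o Fin m => f (u c)) he
  simp [e] at this
  rw [this]

/-- If two swap sequences starting from the vote `v` each transpose
exactly the unordered pairs of `Γ`, each pair exactly once, then they end at the same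
vote, namely the strict linear order obtained from `v` by reversing the relative order
of exactly the pairs in `Γ`.  In particular the vote `v^Γ` obtained by applying an
admissible set of swaps `Γ` does not depend on the order in which the swaps are applied. -/
theorem swapSeq_result_independent_of_order
    {C : Type*} [Fintype C] [DecidableEq C] {m : ℕ} (v : Vote C m)
    (Γ : Finset (Sym2 C)) (l₁ l₂ : List (C × C)) (u₁ u₂ : Vote C m)
    (h₁ : IsSwapSeq v l₁ u₁) (h₂ : IsSwapSeq v l₂ u₂)
    (hn₁ : (l₁.map fun p => s(p.1, p.2)).Nodup)
    (hn₂ : (l₂.map fun p => s(p.1, p.2)).Nodup)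
    (hΓ₁ : (l₁.map fun p => s(p.1, p.2)).toFinset = Γ)
    (hΓ₂ : (l₂.map fun p => s(p.1, p.2)).toFinset = Γ) :
    u₁ = u₂ ∧
    ∀ a b : C, a ≠ b →
      (u₁ a < u₁ b ↔ if s(a, b) ∈ Γ then v b < v a else v a < v b) := by
  have k₁ : ∀ a b : C, a ≠ b →
      (u₁ a < u₁ b ↔ if s(a, b) ∈ Γ then v b < v a else v a < v b) := by
    intro a b hab
    simpa only [← hΓ₁, List.mem_toFinset] using swapSeq_lt_iff h₁ hn₁ a b hab
  have k₂ : ∀ a b : C, a ≠ b →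
      (u₂ a < u₂ b ↔ if s(a, b) ∈ Γ then v b < v a else v a < v b) := by
    intro a b hab
    simpa only [← hΓ₂, List.mem_toFinset] using swapSeq_lt_iff h₂ hn₂ a b hab
  exact ⟨vote_ext_of_lt _ _ fun a b hab => (k₁ a b hab).trans (k₂ a b hab).symm, k₁⟩
end

section
/- Let v be a vote on a finite set of m candidates, let 1 ≤ k ≤ m, and let h ≥ 0. Let Out be a set of h candidates each having rank(·,v) ≤ k, and let In be a set of h candidates each having rank(·,v) > k. Then there exists a vote u on the same candidates whose set of top-k candidates {c : rank(c,u) ≤ k} equals ({c : rank(c,v) ≤ k} \ Out) ∪ In and such that the number of pairs discordant between v and u is exactly Σ_{c ∈ In} rank(c,v) − Σ_{c ∈ Out} rank(c,v). -/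
open Finset

lemma card_equiv_lt {C : Type*} [Fintype C] {m : ℕ} (v : C ≃ Fin m) (x : ℕ)
    (hx : x ≤ m) : (Finset.univ.filter fun c => (v c : ℕ) < x).card = x := by
  have h1 : ((Finset.univ.filter fun c => (v c : ℕ) < x).image fun c => (v c : ℕ))
      = Finset.range x := by
    ext y
    simp only [Finset.mem_image, Finset.mem_filter, Finset.mem_univ, true_and, Finset.mem_range]
    constructor
    · rintro ⟨c, hc, rfl⟩
      exact hc
    · intro hy
      exact ⟨v.symm ⟨y, by omega⟩, by simpa using hy, by simp⟩
  have h2 := Finset.card_image_of_injective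
    (Finset.univ.filter fun c => (v c : ℕ) < x) (f := fun c => (v c : ℕ))
    (fun a b hab => v.injective (Fin.ext hab))
  rw [← h2, h1, Finset.card_range]

lemma sum_below_card {C : Type*} [DecidableEq C] {m : ℕ} (v : C ≃ Fin m) (T : Finset C) :
    2 * (∑ b ∈ T, (T.filter fun a => v a < v b).card) + T.card = T.card * T.card := by
  have h1 : ∑ b ∈ T, (T.filter fun a => v a < v b).card
      = ∑ b ∈ T, (T.filter fun a => v b < v a).card := by
    simp only [Finset.card_filter]
    exact Finset.sum_comm
  have h2 : ∀ b ∈ T, (T.filter fun a => v a < v b).card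
      + (T.filter fun a => v b < v a).card + 1 = T.card := by
    intro b hb
    have h3 : (T.filter fun a => a = b).card = 1 := by
      rw [Finset.filter_eq', if_pos hb, Finset.card_singleton]
    rw [← h3]
    simp only [Finset.card_filter]
    rw [← Finset.sum_add_distrib, ← Finset.sum_add_distrib, Finset.card_eq_sum_ones]
    refine Finset.sum_congr rfl fun a _ => ?_
    have h4 : a = b ↔ v a = v b := v.injective.eq_iff.symm
    rcases lt_trichotomy (v a) (v b) with h | h | h
    · simp [h4, h, h.ne, h.not_gt]
    · simp [h4, h]
    · simp [h4, h, h.ne', h.not_gt]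
  have h5 := Finset.sum_congr rfl h2
  simp only [Finset.sum_add_distrib, Finset.sum_const, smul_eq_mul, mul_one] at h5
  rw [← h1] at h5
  omega

lemma exists_equiv_of_key {C : Type*} [Fintype C] {m : ℕ} (v : C ≃ Fin m) (f : C → ℕ)
    (hf : Function.Injective f) : ∃ u : C ≃ Fin m, ∀ a b, u a < u b ↔ f a < f b := by
  have hc : (Finset.univ.image f).card = m := by
    rw [Finset.card_image_of_injective _ hf, Finset.card_univ, Fintype.card_congr v,
      Fintype.card_fin]
  let g : C → Fin m := fun c =>
    ((Finset.univ.image f).orderIsoOfFin hc).symm ⟨f c, by simp⟩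
  have hg : ∀ a b, g a < g b ↔ f a < f b := by
    intro a b
    simp [g]
  have hi : Function.Injective g := by
    intro a b hab
    apply hf
    have h1 := hg a b
    have h2 := hg b a
    rw [hab] at h1 h2
    simp only [lt_irrefl, false_iff] at h1 h2
    omega
  refine ⟨Equiv.ofBijective g ((Fintype.bijective_iff_injective_and_card g).2
    ⟨hi, by simp [Fintype.card_congr v]⟩), hg⟩

/-- Given a vote `v` on `m` candidates, `1 ≤ k ≤ m`, a set `Out` of `h`
candidates ranked in the top `k` positions of `v` and a set `In` of `h` candidates ranked
below position `k` in `v`, there is a vote `u` whose top-`k` set is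
`(top-k of v \ Out) ∪ In` such that the number of pairs discordant between `v` and `u`
is exactly `Σ_{c ∈ In} rank(c,v) − Σ_{c ∈ Out} rank(c,v)`. -/
theorem exists_vote_with_topk_and_discordant_count
    {C : Type*} [Fintype C] [DecidableEq C] {m k h : ℕ} (v : Vote C m)
    (hk1 : 1 ≤ k) (hkm : k ≤ m)
    (Out In : Finset C) (hOutCard : Out.card = h) (hInCard : In.card = h)
    (hOut : ∀ c ∈ Out, rankOf v c ≤ k) (hIn : ∀ c ∈ In, k < rankOf v c) :
    ∃ u : Vote C m,
      (Finset.univ.filter fun c => rankOf u c ≤ k) =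
        ((Finset.univ.filter fun c => rankOf v c ≤ k) \ Out) ∪ In ∧
      ((discordantPairs v u).card : ℤ) =
        (∑ c ∈ In, (rankOf v c : ℤ)) - ∑ c ∈ Out, (rankOf v c : ℤ) := by
  set K := (Finset.univ.filter fun c => rankOf v c ≤ k) with hK
  have hKmem : ∀ c, c ∈ K ↔ (v c : ℕ) < k := by
    intro c
    rw [hK, Finset.mem_filter]
    simp only [Finset.mem_univ, true_and, rankOf]
    omega
  have hcard : ∀ w : Vote C m, (Finset.univ.filter fun c => rankOf w c ≤ k).card = k := by
    intro w
    exact (congrArg Finset.card (Finset.filter_congr fun c _ => by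
      simp only [rankOf]; omega)).trans (card_equiv_lt w k hkm)
  have hKc : K.card = k := hcard v
  have hOK : Out ⊆ K := fun c hc => by
    simpa [hK] using hOut c hc
  have hdis : Disjoint (K \ Out) In := by
    rw [Finset.disjoint_left]
    intro c hc hc'
    have h1 := (hKmem c).1 (Finset.mem_sdiff.1 hc).1
    have h2 := hIn c hc'
    simp only [rankOf] at h2
    omega
  set T := (K \ Out) ∪ In with hT
  have hTc : T.card = k := by
    rw [hT, Finset.card_union_of_disjoint hdis, Finset.card_sdiff_of_subset hOK]
    have := Finset.card_le_card hOK
    omega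
  obtain ⟨u, hu⟩ := exists_equiv_of_key v (fun c => if c ∈ T then (v c : ℕ) else m + v c) (by
    intro a b hab
    apply v.injective
    apply Fin.ext
    have h1 := (v a).isLt
    have h2 := (v b).isLt
    simp only at hab
    split_ifs at hab <;> omega)
  refine ⟨u, ?_, ?_⟩
  · symm
    apply Finset.eq_of_subset_of_card_le
    · intro c hc
      simp only [Finset.mem_filter, Finset.mem_univ, true_and]
      have h1 := card_equiv_lt u (u c + 1) (u c).isLt
      have h2 : (Finset.univ.filter fun a => (u a : ℕ) < u c + 1) ⊆ T := by
        intro a ha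
        simp only [Finset.mem_filter, Finset.mem_univ, true_and] at ha
        by_contra haT
        have h3 := (hu c a).2 (by
          simp only [hc, haT, if_true, if_false]
          have := (v c).isLt
          omega)
        rw [Fin.lt_def] at h3
        omega
      have h3 := Finset.card_le_card h2
      rw [h1, hTc] at h3
      exact h3
    · rw [hcard u, hTc]
  · have hD : (discordantPairs v u).card
        = ∑ b ∈ T, (Finset.univ.filter fun a => a ∉ T ∧ v a < v b).card := by
      have h1 : ∀ a b, (v a < v b ∧ u b < u a) ↔ (b ∈ T ∧ a ∉ T ∧ v a < v b) := by
        intro a b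
        rw [hu, Fin.lt_def]
        have h1 := (v a).isLt
        have h2 := (v b).isLt
        by_cases ha : a ∈ T <;> by_cases hb : b ∈ T <;> simp [ha, hb] <;> omega
      unfold discordantPairs
      simp only [h1]
      rw [Finset.card_filter, Fintype.sum_prod_type_right,
        ← Finset.sum_subset (Finset.subset_univ T)]
      · refine Finset.sum_congr rfl fun b hb => ?_
        rw [Finset.card_filter]
        simp [hb]
      · intro b _ hb
        simp [hb]
    have hsplit : ∀ b, (Finset.univ.filter fun a => a ∉ T ∧ v a < v b).card
        + (T.filter fun a => v a < v b).card = (v b : ℕ) := by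
      intro b
      have h1 := card_equiv_lt v (v b) (v b).isLt.le
      rw [← Finset.card_filter_add_card_filter_not (fun a => a ∉ T), Finset.filter_filter,
        Finset.filter_filter] at h1
      rw [← h1]
      congr 2 <;> ext a <;> simp [and_comm]
    have hS1 : (discordantPairs v u).card + ∑ b ∈ T, (T.filter fun a => v a < v b).card
        = ∑ b ∈ T, (v b : ℕ) := by
      rw [hD, ← Finset.sum_add_distrib]
      exact Finset.sum_congr rfl fun b _ => hsplit b
    have hS2 : ∑ b ∈ K, (K.filter fun a => v a < v b).card = ∑ b ∈ K, (v b : ℕ) := by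
      refine Finset.sum_congr rfl fun b hb => ?_
      rw [← card_equiv_lt v (v b) (v b).isLt.le]
      congr 1
      ext a
      simp only [Finset.mem_filter, Finset.mem_univ, true_and, hKmem, Fin.lt_def]
      have := (hKmem b).1 hb
      simp
      omega
    have hT2 := sum_below_card v T
    have hK2 := sum_below_card v K
    rw [hTc] at hT2
    rw [hKc] at hK2
    have hTs : ∑ b ∈ T, (v b : ℕ) = ∑ b ∈ K \ Out, (v b : ℕ) + ∑ b ∈ In, (v b : ℕ) :=
      Finset.sum_union hdis
    have hKs := Finset.sum_sdiff (f := fun b => (v b : ℕ)) hOK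
    have e1 : ∑ c ∈ In, (rankOf v c : ℤ) = ((∑ b ∈ In, (v b : ℕ) : ℕ) : ℤ) + h := by
      simp [rankOf, Finset.sum_add_distrib, hInCard]
    have e2 : ∑ c ∈ Out, (rankOf v c : ℤ) = ((∑ b ∈ Out, (v b : ℕ) : ℕ) : ℤ) + h := by
      simp [rankOf, Finset.sum_add_distrib, hOutCard]
    rw [e1, e2]
    omega
end

section
/- Let v and u be votes on a finite set of m candidates and let 1 ≤ k ≤ m. Define Out = {c : rank(c,v) ≤ k and rank(c,u) > k} and In = {c : rank(c,u) ≤ k and rank(c,v) > k}. Then the number of pairs discordant between v and u is at least Σ_{c ∈ In} rank(c,v) − Σ_{c ∈ Out} rank(c,v). -/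
open Finset

lemma rankOf_eq_card {C : Type*} [Fintype C] [DecidableEq C] {m : ℕ} (v : Vote C m) (c : C) :
    rankOf v c = (Finset.univ.filter (fun a => v a ≤ v c)).card := by
  unfold rankOf
  rw [← Fin.card_Iic (v c)]
  symm
  apply Finset.card_equiv v
  intro i
  simp

lemma two_mul_card_le {C : Type*} [Fintype C] [DecidableEq C] {m : ℕ} (v : Vote C m)
    (X : Finset C) :
    2 * ((X ×ˢ X).filter (fun p => v p.1 ≤ v p.2)).card = X.card * X.card + X.card := by
  have h1 := Finset.card_filter_add_card_filter_not (s := X ×ˢ X) (fun p => v p.1 ≤ v p.2)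
  have h2 : ((X ×ˢ X).filter (fun p => v p.1 ≤ v p.2)).card =
      ((X ×ˢ X).filter (fun p => ¬ v p.1 ≤ v p.2)).card + X.card := by
    rw [← Finset.diag_card X]
    have h3 : ((X ×ˢ X).filter (fun p => ¬ v p.1 ≤ v p.2)).card =
        ((X ×ˢ X).filter (fun p => v p.1 < v p.2)).card := by
      apply Finset.card_equiv (Equiv.prodComm C C)
      intro p
      simp
      tauto
    rw [h3, ← Finset.card_union_of_disjoint]
    · congr 1
      ext ⟨a, b⟩
      simp only [Finset.mem_filter, Finset.mem_product, Finset.mem_union, Finset.mem_diag,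
        le_iff_lt_or_eq, v.injective.eq_iff]
      constructor
      · tauto
      · rintro (h | ⟨h, rfl⟩)
        · tauto
        · tauto
    · rw [Finset.disjoint_left]
      rintro ⟨a, b⟩ h h'
      simp only [Finset.mem_filter, Finset.mem_diag] at h h'
      obtain ⟨-, rfl⟩ := h'
      exact lt_irrefl _ h.2
  rw [Finset.card_product] at h1
  omega

lemma sum_rank_eq {C : Type*} [Fintype C] [DecidableEq C] {m : ℕ} (v : Vote C m)
    (X : Finset C) :
    ∑ c ∈ X, rankOf v c = ((X ×ˢ X).filter (fun p => v p.1 ≤ v p.2)).card +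
      (Finset.univ.filter (fun p : C × C => p.2 ∈ X ∧ p.1 ∉ X ∧ v p.1 ≤ v p.2)).card := by
  rw [← Finset.card_union_of_disjoint]
  · simp only [rankOf_eq_card]
    rw [← Finset.card_sigma]
    apply Finset.card_equiv ((Equiv.sigmaEquivProd C C).trans (Equiv.prodComm C C))
    rintro ⟨b, a⟩
    simp
    tauto
  · rw [Finset.disjoint_left]
    rintro ⟨a, b⟩ h h'
    simp at h h'
    tauto

/-- For votes `v`, `u` on `m` candidates and `1 ≤ k ≤ m`, with
`Out = {c : rank(c,v) ≤ k < rank(c,u)}` and `In = {c : rank(c,u) ≤ k < rank(c,v)}`,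
the number of pairs discordant between `v` and `u` is at least
`Σ_{c ∈ In} rank(c,v) − Σ_{c ∈ Out} rank(c,v)`. -/
theorem discordant_count_lower_bound
    {C : Type*} [Fintype C] [DecidableEq C] {m k : ℕ} (v u : Vote C m)
    (hk1 : 1 ≤ k) (hkm : k ≤ m) :
    (∑ c ∈ Finset.univ.filter (fun c => rankOf u c ≤ k ∧ k < rankOf v c),
        (rankOf v c : ℤ)) -
      (∑ c ∈ Finset.univ.filter (fun c => rankOf v c ≤ k ∧ k < rankOf u c),
        (rankOf v c : ℤ)) ≤
      ((discordantPairs v u).card : ℤ) := by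
  set S := Finset.univ.filter (fun c => rankOf u c ≤ k) with hS
  set T := Finset.univ.filter (fun c => rankOf v c ≤ k) with hT
  have hI : Finset.univ.filter (fun c => rankOf u c ≤ k ∧ k < rankOf v c) = S \ T := by
    ext c; simp [hS, hT]
  have hO : Finset.univ.filter (fun c => rankOf v c ≤ k ∧ k < rankOf u c) = T \ S := by
    ext c; simp [hS, hT]
  rw [hI, hO, Finset.sum_sdiff_sub_sum_sdiff]
  have hc : T.card = S.card := by
    apply Finset.card_equiv (v.trans u.symm)
    intro c
    simp [hS, hT, rankOf]
  have e1 := sum_rank_eq v S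
  have e2 := sum_rank_eq v T
  have c1 := two_mul_card_le v S
  have c2 := two_mul_card_le v T
  rw [hc] at c2
  have hle : (Finset.univ.filter (fun p : C × C => p.2 ∈ S ∧ p.1 ∉ S ∧ v p.1 ≤ v p.2)).card ≤
      (discordantPairs v u).card := by
    apply Finset.card_le_card
    rintro ⟨a, b⟩ h
    simp only [hS, discordantPairs, Finset.mem_filter, Finset.mem_univ, true_and, rankOf] at h ⊢
    obtain ⟨h1, h2, h3⟩ := h
    have h5 : (u b : ℕ) + 1 ≤ k := by simpa using h1
    have h6 : ¬ ((u a : ℕ) + 1 ≤ k) := by simpa using h2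
    have h4 : u b < u a := by
      rw [Fin.lt_def]; omega
    refine ⟨lt_of_le_of_ne h3 ?_, h4⟩
    intro h
    rw [v.injective h] at h4
    exact lt_irrefl _ h4
  have : (∑ c ∈ S, rankOf v c) ≤ (∑ c ∈ T, rankOf v c) + (discordantPairs v u).card := by
    omega
  zify at this
  linarith
end

section
/- Let v be a vote on a finite candidate set C and let c be a function assigning to each unordered pair of distinct candidates a nonnegative integer cost. For a vote u on C, the following are equivalent: (i) u can be obtained from v by a swap sequence that transposes each unordered pair at most once and in which every transposed pair has cost 0; (ii) every pair {a,b} with c({a,b}) > 0 is ranked in the same relative order by u as by v; (iii) u is a linear extension of the transitive closure of the relation {(a,b) : a precedes b in v and c({a,b}) > 0}. -/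
open Finset

/-- Swapping two adjacent candidates changes the relative order of no other pair. -/
theorem swap_lt_iff {C : Type*} [DecidableEq C] {m : ℕ} (v : Vote C m) (a b : C)
    (hadj : (v a : ℕ) + 1 = (v b : ℕ)) (x y : C)
    (h : s(x, y) ≠ s(a, b)) :
    ((Equiv.swap a b).trans v x < (Equiv.swap a b).trans v y ↔ v x < v y) := by
  have key : ∀ z w : C, (v z : ℕ) = v w → z = w := fun z w hzw => v.injective (Fin.ext hzw)
  have hxa := key x a
  have hxb := key x b
  have hya := key y a
  have hyb := key y b
  simp only [Equiv.trans_apply, Fin.lt_def, Equiv.swap_apply_def]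
  rw [Ne, Sym2.eq_iff] at h
  split_ifs <;> subst_vars <;> first | omega | grind

theorem swap_pair {C : Type*} [DecidableEq C] {m : ℕ} (v : Vote C m) (a b : C)
    (hadj : (v a : ℕ) + 1 = (v b : ℕ)) :
    (Equiv.swap a b).trans v b < (Equiv.swap a b).trans v a := by
  simp only [Equiv.trans_apply, Fin.lt_def, Equiv.swap_apply_left, Equiv.swap_apply_right]
  omega

theorem preserve_of_swapSeq {C : Type*} [DecidableEq C] {m : ℕ} (c : Sym2 C → ℕ)
    {v u : Vote C m} {l : List (C × C)} (h : IsSwapSeq v l u)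
    (hc : ∀ p ∈ l, c s(p.1, p.2) = 0) (x y : C) (hxy : 0 < c s(x, y)) :
    v x < v y ↔ u x < u y := by
  induction h with
  | nil v => rfl
  | cons v a b l u hadj htail ih =>
    rw [← ih (fun p hp => hc p (List.mem_cons_of_mem _ hp))]
    refine (swap_lt_iff v a b hadj x y ?_).symm
    intro he
    have := hc (a, b) (by simp)
    simp only at this
    rw [he] at hxy
    omega

/-- If no adjacent pair of `v` is discordant with `u`, then `v = u`. -/
theorem eq_of_no_adjacent {C : Type*} {m : ℕ} (v u : Vote C m)
    (h : ∀ a b : C, (v a : ℕ) + 1 = (v b : ℕ) → ¬ u b < u a) : v = u := by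
  have hmono : StrictMono (v.symm.trans u) := by
    cases m with
    | zero => intro i; exact i.elim0
    | succ n =>
      rw [Fin.strictMono_iff_lt_succ]
      intro i
      have h1 := h (v.symm i.castSucc) (v.symm i.succ) (by simp)
      have h2 : u (v.symm i.castSucc) ≠ u (v.symm i.succ) := by
        intro he
        have := v.symm.injective (u.injective he)
        exact absurd this (Fin.castSucc_lt_succ).ne
      exact lt_of_le_of_ne (not_lt.mp h1) h2
  have hid := (StrictMono.range_inj hmono (strictMono_id (α := Fin m))).mp
    (by rw [(v.symm.trans u).surjective.range_eq]; simp)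
  ext x
  have := congrFun hid (v x)
  simp at this
  rw [this]

theorem exists_swapSeq {C : Type*} [Fintype C] [DecidableEq C] {m : ℕ} (u : Vote C m) :
    ∀ (n : ℕ) (v : Vote C m), (discordantPairs v u).card = n →
      ∃ l : List (C × C), IsSwapSeq v l u ∧ (l.map fun p => s(p.1, p.2)).Nodup ∧
        ∀ p ∈ l, v p.1 < v p.2 ∧ u p.2 < u p.1 := by
  intro n
  induction n using Nat.strong_induction_on with
  | _ n ih =>
    intro v hn
    by_cases hex : ∃ a b : C, (v a : ℕ) + 1 = (v b : ℕ) ∧ u b < u a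
    · obtain ⟨a, b, hadj, hu⟩ := hex
      have hab : v a < v b := by rw [Fin.lt_def]; omega
      have hsw := swap_pair v a b hadj
      have hsub : ∀ p : C × C, ((Equiv.swap a b).trans v p.1 < (Equiv.swap a b).trans v p.2 ∧
          u p.2 < u p.1) → s(p.1, p.2) ≠ s(a, b) ∧ v p.1 < v p.2 ∧ u p.2 < u p.1 := by
        rintro ⟨x, y⟩ ⟨h1, h2⟩
        have hne : s(x, y) ≠ s(a, b) := by
          intro he
          rcases Sym2.eq_iff.mp he with ⟨rfl, rfl⟩ | ⟨rfl, rfl⟩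
          · exact lt_asymm h1 hsw
          · exact lt_asymm h2 hu
        exact ⟨hne, (swap_lt_iff v a b hadj x y hne).mp h1, h2⟩
      have hlt : (discordantPairs ((Equiv.swap a b).trans v) u).card < n := by
        rw [← hn]
        apply Finset.card_lt_card
        rw [Finset.ssubset_iff_of_subset]
        · refine ⟨(a, b), ?_, ?_⟩
          · simp only [discordantPairs, Finset.mem_filter, Finset.mem_univ, true_and]
            exact ⟨hab, hu⟩
          · simp only [discordantPairs, Finset.mem_filter, Finset.mem_univ, true_and]
            exact fun h => lt_asymm h.1 hsw
        · intro p hp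
          simp only [discordantPairs, Finset.mem_filter, Finset.mem_univ, true_and] at hp ⊢
          exact (hsub p hp).2
      obtain ⟨l, hl, hnd, hd⟩ := ih _ hlt _ rfl
      refine ⟨(a, b) :: l, IsSwapSeq.cons v a b l u hadj hl, ?_, ?_⟩
      · rw [List.map_cons, List.nodup_cons]
        refine ⟨?_, hnd⟩
        intro hm
        obtain ⟨p, hp, he⟩ := List.mem_map.mp hm
        exact (hsub p (hd p hp)).1 he
      · intro p hp
        rcases List.mem_cons.mp hp with rfl | hp
        · exact ⟨hab, hu⟩
        · exact (hsub p (hd p hp)).2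
    · push Not at hex
      have : v = u := eq_of_no_adjacent v u fun a b h => not_lt.mpr (hex a b h)
      subst this
      exact ⟨[], IsSwapSeq.nil v, by simp, by simp⟩

/-- For votes `v`, `u` on a finite candidate set and a cost function
`c` on unordered pairs, the following are equivalent:
(i) `u` is reachable from `v` by a swap sequence transposing each unordered pair at most
once, all of whose transposed pairs have cost `0`;
(ii) every pair of positive cost is ranked in the same relative order by `u` as by `v`;
(iii) `u` is a linear extension of the transitive closure of the relation
`{(a,b) : a precedes b in v and c({a,b}) > 0}`. -/
theorem zero_cost_bribery_iff_possible_winner_extension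
    {C : Type*} [Fintype C] [DecidableEq C] {m : ℕ} (v u : Vote C m)
    (c : Sym2 C → ℕ) :
    ((∃ l : List (C × C), IsSwapSeq v l u ∧
        (l.map fun p => s(p.1, p.2)).Nodup ∧
        ∀ p ∈ l, c s(p.1, p.2) = 0) ↔
      (∀ a b : C, 0 < c s(a, b) → (v a < v b ↔ u a < u b))) ∧
    ((∀ a b : C, 0 < c s(a, b) → (v a < v b ↔ u a < u b)) ↔
      (∀ a b : C,
        Relation.TransGen (fun x y => v x < v y ∧ 0 < c s(x, y)) a b → u a < u b)) := by
  refine ⟨⟨?_, ?_⟩, ⟨?_, ?_⟩⟩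
  · rintro ⟨l, hl, -, hc⟩ a b hab
    exact preserve_of_swapSeq c hl hc a b hab
  · intro h
    obtain ⟨l, hl, hnd, hd⟩ := exists_swapSeq u _ v rfl
    refine ⟨l, hl, hnd, fun p hp => ?_⟩
    by_contra hne
    obtain ⟨h1, h2⟩ := hd p hp
    exact lt_asymm h2 ((h p.1 p.2 (Nat.pos_of_ne_zero hne)).mp h1)
  · intro h a b hab
    induction hab with
    | single hab => exact (h _ _ hab.2).mp hab.1
    | tail _ hbc ih => exact ih.trans ((h _ _ hbc.2).mp hbc.1)
  · intro h a b hab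
    refine ⟨fun hv => h a b (Relation.TransGen.single ⟨hv, hab⟩), fun hu => ?_⟩
    rcases lt_trichotomy (v a) (v b) with hv | hv | hv
    · exact hv
    · rw [v.injective hv] at hu
      exact absurd hu (lt_irrefl _)
    · exact absurd (h b a (Relation.TransGen.single ⟨hv, by rwa [Sym2.eq_swap]⟩)) (lt_asymm hu)
end

section
/- Let C be a finite candidate set with a distinguished candidate p, let v_1,…,v_n be votes on C, let δ > 0, and for each i let c_i assign to each unordered pair of distinct candidates a cost belonging to {0, δ}. Let E be an arbitrary function mapping n-tuples of votes on C to subsets of C (the set of winners under the election system E). Then the following are equivalent: (i) for each i there is a swap sequence transforming v_i into some vote u_i, transposing each pair at most once with every transposed pair of c_i-cost 0 (so the total cost of the bribery is 0), such that p ∈ E(u_1,…,u_n); (ii) there exist votes u_1,…,u_n such that each u_i is a linear extension of the transitive closure of the relation {(a,b) : a precedes b in v_i and c_i({a,b}) = δ}, and p ∈ E(u_1,…,u_n). (This states that Swap Bribery with costs in {0,δ} and budget zero is equivalent to the Possible Winner problem on the derived partial votes.) -/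
open Finset

theorem swap_lt_iff_aux {C : Type*} [DecidableEq C] {m : ℕ} (v : Vote C m) (x y a b : C)
    (hadj : (v x : ℕ) + 1 = (v y : ℕ)) (h : s(a, b) ≠ s(x, y)) :
    ((Equiv.swap x y).trans v) a < ((Equiv.swap x y).trans v) b ↔ v a < v b := by
  have hinj : ∀ c d : C, (v c : ℕ) = (v d : ℕ) → c = d := fun c d hcd =>
    v.injective (Fin.ext hcd)
  have hax := hinj a x
  have hay := hinj a y
  have hbx := hinj b x
  have hby := hinj b y
  simp only [ne_eq, Sym2.eq_iff, not_or, not_and] at h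
  simp only [Equiv.trans_apply, Equiv.swap_apply_def, Fin.lt_def]
  split_ifs <;> grind

theorem swapSeq_lt_iff_aux {C : Type*} [DecidableEq C] {m : ℕ} {v u : Vote C m}
    {l : List (C × C)} (h : IsSwapSeq v l u) (a b : C)
    (hn : s(a, b) ∉ l.map fun q => s(q.1, q.2)) : u a < u b ↔ v a < v b := by
  induction h with
  | nil v => exact Iff.rfl
  | cons v x y l u hadj htail ih =>
    simp only [List.map_cons, List.mem_cons, not_or] at hn
    rw [ih hn.2, swap_lt_iff_aux v x y a b hadj hn.1]

theorem exists_adjacent_aux {C : Type*} {m : ℕ} {v u : Vote C m} (h : v ≠ u) :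
    ∃ a b : C, (v a : ℕ) + 1 = (v b : ℕ) ∧ u b < u a := by
  by_contra hc
  push Not at hc
  have key : ∀ k : ℕ, ∀ i j : Fin m, (i : ℕ) + k + 1 = (j : ℕ) → u (v.symm i) < u (v.symm j) := by
    have step : ∀ i j : Fin m, (i : ℕ) + 1 = (j : ℕ) → u (v.symm i) < u (v.symm j) := by
      intro i j hij
      refine lt_of_le_of_ne (hc _ _ (by simpa using hij)) ?_
      intro he
      have := v.symm.injective (u.injective he)
      subst this
      omega
    intro k
    induction k with
    | zero => intro i j hij; exact step i j hij
    | succ k ih =>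
      intro i j hij
      have hj := j.isLt
      exact (ih i ⟨(i : ℕ) + k + 1, by omega⟩ rfl).trans (step _ j (by simpa [add_assoc] using hij))
  have hmono : StrictMono (v.symm.trans u) := by
    intro i j hij
    have hij' : (i : ℕ) < j := hij
    exact key ((j : ℕ) - i - 1) i j (by omega)
  have hid : (StrictMono.orderIsoOfSurjective _ hmono (v.symm.trans u).surjective) =
      OrderIso.refl (Fin m) := Subsingleton.elim _ _
  apply h
  ext c
  have := congrArg (fun e => (e (v c) : ℕ)) hid
  simpa using this.symm

theorem exists_swapSeq_aux {C : Type*} [Fintype C] [DecidableEq C] {m : ℕ} (u : Vote C m) :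
    ∀ (k : ℕ) (v : Vote C m), (discordantPairs v u).card = k →
      ∃ l : List (C × C), IsSwapSeq v l u ∧ (l.map fun q => s(q.1, q.2)).Nodup ∧
        ∀ q ∈ l, v q.1 < v q.2 ∧ u q.2 < u q.1 := by
  intro k
  induction k using Nat.strong_induction_on with
  | _ k ih =>
    intro v hk
    by_cases hvu : v = u
    · subst hvu
      exact ⟨[], IsSwapSeq.nil _, by simp, by simp⟩
    obtain ⟨a, b, hadj, hu⟩ := exists_adjacent_aux hvu
    have hab : v a < v b := by rw [Fin.lt_def]; omega
    have hsub : ∀ q : C × C, ((Equiv.swap a b).trans v) q.1 < ((Equiv.swap a b).trans v) q.2 →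
        u q.2 < u q.1 → s(q.1, q.2) ≠ s(a, b) ∧ v q.1 < v q.2 := by
      rintro ⟨x, y⟩ h1 h2
      have hne : s(x, y) ≠ s(a, b) := by
        intro he
        rcases Sym2.eq_iff.1 he with ⟨rfl, rfl⟩ | ⟨rfl, rfl⟩
        · simp at h1
          exact lt_asymm h1 hab
        · exact lt_asymm h2 hu
      exact ⟨hne, (swap_lt_iff_aux v a b x y hadj hne).1 h1⟩
    have hlt : (discordantPairs ((Equiv.swap a b).trans v) u).card < k := by
      rw [← hk]
      apply Finset.card_lt_card
      rw [Finset.ssubset_iff_of_subset]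
      · refine ⟨(a, b), ?_, ?_⟩
        · simp [discordantPairs, hab, hu]
        · intro hm
          have hm' := (Finset.mem_filter.1 hm).2
          exact (hsub (a, b) hm'.1 hm'.2).1 rfl
      · intro q hq
        have hq' := (Finset.mem_filter.1 hq).2
        exact Finset.mem_filter.2 ⟨Finset.mem_univ _, (hsub q hq'.1 hq'.2).2, hq'.2⟩
    obtain ⟨l, hl, hnd, hq⟩ := ih _ hlt _ rfl
    refine ⟨(a, b) :: l, IsSwapSeq.cons v a b l u hadj hl, ?_, ?_⟩
    · rw [List.map_cons, List.nodup_cons]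
      refine ⟨?_, hnd⟩
      intro hm
      obtain ⟨q, hql, he⟩ := List.mem_map.1 hm
      exact (hsub q (hq q hql).1 (hq q hql).2).1 he
    · intro q hm
      rcases List.mem_cons.1 hm with rfl | hm
      · exact ⟨hab, hu⟩
      · exact ⟨(hsub q (hq q hm).1 (hq q hm).2).2, (hq q hm).2⟩

/-- Swap Bribery with costs in `{0, δ}` (`δ > 0`) and budget zero is
equivalent to the Possible Winner problem on the derived partial votes: for any election
system `E` (mapping tuples of votes to sets of winners) and preferred candidate `p`, the
votes `v_1, …, v_n` can be bribed at zero cost so that `p` wins if and only if each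
`v_i` can be replaced by a linear extension of the transitive closure of
`{(a,b) : a precedes b in v_i and c_i({a,b}) = δ}` so that `p` wins. -/
theorem swap_bribery_budget_zero_iff_possible_winner
    {C : Type*} [Fintype C] [DecidableEq C] {m n : ℕ}
    (p : C) (v : Fin n → Vote C m) (δ : ℕ) (hδ : 0 < δ)
    (cost : Fin n → Sym2 C → ℕ)
    (hcost : ∀ i s, cost i s = 0 ∨ cost i s = δ)
    (E : (Fin n → Vote C m) → Finset C) :
    (∃ u : Fin n → Vote C m,
        (∀ i, ∃ l : List (C × C), IsSwapSeq (v i) l (u i) ∧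
          (l.map fun q => s(q.1, q.2)).Nodup ∧
          ∀ q ∈ l, cost i s(q.1, q.2) = 0) ∧
        p ∈ E u) ↔
    (∃ u : Fin n → Vote C m,
        (∀ i, ∀ a b : C,
          Relation.TransGen (fun x y => v i x < v i y ∧ cost i s(x, y) = δ) a b →
            u i a < u i b) ∧
        p ∈ E u) := by
  constructor
  · rintro ⟨u, hu, hp⟩
    refine ⟨u, fun i a b hab => ?_, hp⟩
    obtain ⟨l, hl, -, hc⟩ := hu i
    have base : ∀ x y : C, v i x < v i y ∧ cost i s(x, y) = δ → u i x < u i y := by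
      rintro x y ⟨hxy, hδ'⟩
      refine (swapSeq_lt_iff_aux hl x y ?_).2 hxy
      intro hm
      obtain ⟨q, hql, he⟩ := List.mem_map.1 hm
      have h0 := hc q hql
      rw [he] at h0
      omega
    induction hab with
    | single h => exact base _ _ h
    | tail _ h ih => exact ih.trans (base _ _ h)
  · rintro ⟨u, hu, hp⟩
    refine ⟨u, fun i => ?_, hp⟩
    obtain ⟨l, hl, hnd, hq⟩ := exists_swapSeq_aux (u i) _ (v i) rfl
    refine ⟨l, hl, hnd, fun q hm => ?_⟩
    rcases hcost i s(q.1, q.2) with h | h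
    · exact h
    · exact absurd (hu i q.1 q.2 (Relation.TransGen.single ⟨(hq q hm).1, h⟩))
        (lt_asymm (hq q hm).2)
end

section
/- Let G be an undirected graph on vertices x_1,…,x_N with N ≥ 2 and let 1 ≤ k ≤ N; construct the single-vote Swap Bribery instance (C, w, cost) as described. Then for all indices 1 ≤ i_1 < … < i_k ≤ N, the minimum, over all votes u on C satisfying rank(p,u) = k+1 and {c : rank(c,u) ≤ k} = {c_{i_1},…,c_{i_k}}, of the total cost Σ cost({a,b}) taken over all pairs {a,b} discordant between w and u, equals (N−k)·N² + k·N − |{(h,j) : 1 ≤ h < j ≤ k and x_{i_h} x_{i_j} ∈ E(G)}|. -/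
open Finset

/-- The candidate set of the single-vote Swap Bribery instance constructed from a graph
on `N` vertices and a parameter `k`: dummies `d_1, …, d_{k+1}` (the summand `Fin (k+1)`),
the vertex candidates `c_1, …, c_N` (the summand `Fin N`), and the preferred candidate
`p` (the summand `Fin 1`); in total `N + k + 2` candidates. -/
abbrev BriberyCand (N k : ℕ) := Fin (k + 1) ⊕ (Fin N ⊕ Fin 1)

/-- The dummy candidate `d_j` (for `j : Fin (k+1)`). -/
abbrev BriberyCand.d {N k : ℕ} (j : Fin (k + 1)) : BriberyCand N k := Sum.inl j

/-- The vertex candidate `c_i` (for `i : Fin N`). -/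
abbrev BriberyCand.c {N k : ℕ} (i : Fin N) : BriberyCand N k := Sum.inr (Sum.inl i)

/-- The preferred candidate `p`. -/
abbrev BriberyCand.p {N k : ℕ} : BriberyCand N k := Sum.inr (Sum.inr 0)

/-- The single vote `w : d_1 ≻ … ≻ d_{k+1} ≻ c_1 ≻ … ≻ c_N ≻ p` of the constructed
Swap Bribery instance. -/
def briberyVote (N k : ℕ) : Vote (BriberyCand N k) ((k + 1) + (N + 1)) :=
  (Equiv.sumCongr (Equiv.refl (Fin (k + 1))) finSumFinEquiv).trans finSumFinEquiv

/-- The cost function of the constructed Swap Bribery instance, as a symmetric function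
of the two members of the swapped pair: swapping `c_i` and `c_j` costs `1` if `x_i x_j`
is an edge of `G` and `0` otherwise; swapping `d_1` and `c_i` costs
`N − |{j < i : x_j x_i ∈ E(G)}|`; swapping `c_i` and `p` costs `N²`; every other swap
costs `0`. -/
def briberyCost {N : ℕ} (G : SimpleGraph (Fin N)) [DecidableRel G.Adj] (k : ℕ) :
    BriberyCand N k → BriberyCand N k → ℕ
  | Sum.inr (Sum.inl i), Sum.inr (Sum.inl j) => if G.Adj i j then 1 else 0
  | Sum.inl d, Sum.inr (Sum.inl i) =>
      if d = 0 then N - (Finset.univ.filter fun j => j < i ∧ G.Adj j i).card else 0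
  | Sum.inr (Sum.inl i), Sum.inl d =>
      if d = 0 then N - (Finset.univ.filter fun j => j < i ∧ G.Adj j i).card else 0
  | Sum.inr (Sum.inl _), Sum.inr (Sum.inr _) => N ^ 2
  | Sum.inr (Sum.inr _), Sum.inr (Sum.inl _) => N ^ 2
  | _, _ => 0

lemma exists_vote_of_key {C : Type} [Fintype C] {m : ℕ} (hm : Fintype.card C = m)
    (key : C → ℕ) (hkey : Function.Injective key) :
    ∃ u : Vote C m, ∀ a b, u a < u b ↔ key a < key b := by
  letI : LinearOrder C := LinearOrder.lift' key hkey
  refine ⟨(Fintype.orderIsoFinOfCardEq C hm).symm.toEquiv, fun a b => ?_⟩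
  exact (Fintype.orderIsoFinOfCardEq C hm).symm.lt_iff_lt

lemma vote_val_eq_card {C : Type} [Fintype C] {m : ℕ} (u : Vote C m) (a : C) :
    (u a : ℕ) = (univ.filter fun b => u b < u a).card := by
  have h : ((univ.filter fun b => u b < u a).map u.toEmbedding) = Finset.Iio (u a) := by
    ext x
    simp only [mem_map, mem_filter, mem_univ, true_and, mem_Iio]
    constructor
    · rintro ⟨b, hb, rfl⟩; exact hb
    · intro hx; exact ⟨u.symm x, by simpa using hx, by simp⟩
  rw [← Finset.card_map u.toEmbedding, h, Fin.card_Iio]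

lemma total_cost_eq {N k : ℕ} (G : SimpleGraph (Fin N)) [DecidableRel G.Adj]
    (u : Vote (BriberyCand N k) ((k + 1) + (N + 1))) :
    ∑ q ∈ discordantPairs (briberyVote N k) u, briberyCost G k q.1 q.2 =
      (∑ i : Fin N, if u (BriberyCand.c i) < u (BriberyCand.d 0) then
          N - (Finset.univ.filter fun j => j < i ∧ G.Adj j i).card else 0)
      + (∑ i : Fin N, ∑ j : Fin N,
          if i < j ∧ u (BriberyCand.c j) < u (BriberyCand.c i) then
            (if G.Adj i j then 1 else 0) else 0)
      + ∑ i : Fin N, if u BriberyCand.p < u (BriberyCand.c i) then N ^ 2 else 0 := by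
  have w1 : ∀ (d : Fin (k+1)) (i : Fin N),
      briberyVote N k (Sum.inl d) < briberyVote N k (Sum.inr (Sum.inl i)) := by
    intro d i; rw [Fin.lt_def]; simp [briberyVote]; omega
  have w2 : ∀ (i : Fin N) (x : Fin 1),
      briberyVote N k (Sum.inr (Sum.inl i)) < briberyVote N k (Sum.inr (Sum.inr x)) := by
    intro d i; rw [Fin.lt_def]; simp [briberyVote]
  have w3 : ∀ (i j : Fin N),
      briberyVote N k (Sum.inr (Sum.inl i)) < briberyVote N k (Sum.inr (Sum.inl j)) ↔ i < j := by
    intro d i; simp [briberyVote]; rfl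
  have w4 := fun d i => (w1 d i).not_gt
  have w5 := fun d i => (w2 d i).not_gt
  unfold discordantPairs
  rw [Finset.sum_filter, Fintype.sum_prod_type]
  simp only [Fintype.sum_sum_type, briberyCost, w1, w2, w3, w4, w5, true_and, false_and, if_false,
    ite_self, Finset.sum_const_zero, zero_add, add_zero, Finset.sum_add_distrib]
  rw [Fin.sum_univ_succ]
  simp [Fin.succ_ne_zero, add_assoc]

lemma opt_arith {N k : ℕ} (G : SimpleGraph (Fin N)) [DecidableRel G.Adj]
    (hkN : k ≤ N) (σ : Fin k → Fin N) (hσ : StrictMono σ) :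
    (∑ i : Fin N, if i ∈ univ.image σ then
          N - (Finset.univ.filter fun j => j < i ∧ G.Adj j i).card else 0)
      + (∑ i : Fin N, ∑ j : Fin N,
          if i < j ∧ (j ∈ univ.image σ ∧ i ∉ univ.image σ) then
            (if G.Adj i j then 1 else 0) else 0)
      + (∑ i : Fin N, if i ∉ univ.image σ then N ^ 2 else 0)
    = (N - k) * N ^ 2 + k * N -
        ((Finset.univ : Finset (Fin k × Fin k)).filter
          fun q => q.1 < q.2 ∧ G.Adj (σ q.1) (σ q.2)).card := by
  have hA : ((Finset.univ : Finset (Fin k × Fin k)).filter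
          fun q => q.1 < q.2 ∧ G.Adj (σ q.1) (σ q.2)).card =
      ∑ j : Fin N, ∑ i : Fin N, if i < j ∧ (j ∈ univ.image σ ∧ i ∈ univ.image σ) then
            (if G.Adj i j then 1 else 0) else 0 := by
    rw [Finset.card_filter, Fintype.sum_prod_type, Finset.sum_comm]
    have key : ∀ f : Fin N → ℕ, ∑ i : Fin k, f (σ i) = ∑ i, if i ∈ univ.image σ then f i else 0 := by
      intro f
      rw [← Finset.sum_filter, Finset.filter_mem_eq_inter, Finset.univ_inter,
        Finset.sum_image (fun a _ b _ h => hσ.injective h)]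
    simp only [← hσ.lt_iff_lt]
    rw [key (fun j => ∑ i : Fin k, if σ i < j ∧ G.Adj (σ i) j then 1 else 0)]
    refine Finset.sum_congr rfl fun j _ => ?_
    rw [key (fun i => if i < j ∧ G.Adj i j then 1 else 0)]
    split_ifs with hj
    · refine Finset.sum_congr rfl fun i _ => ?_
      split_ifs <;> tauto
    · symm
      apply Finset.sum_eq_zero
      intro i _
      rw [if_neg]; tauto
  have hcard : (univ.image σ).card = k := by
    rw [Finset.card_image_of_injective _ hσ.injective, Finset.card_fin]
  have h3 : (∑ i : Fin N, if i ∉ univ.image σ then N ^ 2 else 0) = (N - k) * N ^ 2 := by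
    rw [← Finset.sum_filter, Finset.sum_const, smul_eq_mul]
    congr 1
    rw [Finset.filter_not, Finset.filter_mem_eq_inter, Finset.univ_inter,
      Finset.card_sdiff_of_subset (Finset.subset_univ _), hcard, Finset.card_fin]
  have h4 : (∑ j : Fin N, if j ∈ univ.image σ then N else 0) = k * N := by
    rw [← Finset.sum_filter, Finset.sum_const, smul_eq_mul, Finset.filter_mem_eq_inter,
      Finset.univ_inter, hcard]
  have h12 : (∑ i : Fin N, if i ∈ univ.image σ then
          N - (Finset.univ.filter fun j => j < i ∧ G.Adj j i).card else 0)
      + (∑ i : Fin N, ∑ j : Fin N,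
          if i < j ∧ (j ∈ univ.image σ ∧ i ∉ univ.image σ) then
            (if G.Adj i j then 1 else 0) else 0)
      + (∑ j : Fin N, ∑ i : Fin N, if i < j ∧ (j ∈ univ.image σ ∧ i ∈ univ.image σ) then
            (if G.Adj i j then 1 else 0) else 0) = k * N := by
    rw [← h4, Finset.sum_comm (s := univ) (t := univ) (f := fun i j => if i < j ∧ (j ∈ univ.image σ ∧ i ∉ univ.image σ) then
            (if G.Adj i j then 1 else 0) else 0), ← Finset.sum_add_distrib, ← Finset.sum_add_distrib]
    refine Finset.sum_congr rfl fun j _ => ?_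
    rw [add_assoc, ← Finset.sum_add_distrib]
    by_cases hj : j ∈ univ.image σ
    · have hle : (Finset.univ.filter fun i => i < j ∧ G.Adj i j).card ≤ N := by
        simpa using Finset.card_le_univ (Finset.univ.filter fun i => i < j ∧ G.Adj i j)
      have : (∑ i : Fin N, ((if i < j ∧ (j ∈ univ.image σ ∧ i ∉ univ.image σ) then
            (if G.Adj i j then 1 else 0) else 0) + (if i < j ∧ (j ∈ univ.image σ ∧ i ∈ univ.image σ) then
            (if G.Adj i j then 1 else 0) else 0))) = (Finset.univ.filter fun i => i < j ∧ G.Adj i j).card := by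
        rw [Finset.card_filter]
        refine Finset.sum_congr rfl fun i _ => ?_
        by_cases h1 : i < j <;> by_cases h2 : i ∈ univ.image σ <;> by_cases h3 : G.Adj i j <;>
          simp only [h1, h2, h3, hj, not_true, not_false_iff, and_true, and_false, if_true, if_false] <;> simp
      rw [this, if_pos hj, if_pos hj]; omega
    · simp only [hj, if_false, false_and, and_false, add_zero, Finset.sum_const_zero]
  rw [hA, h3]
  omega

/-- In the Swap Bribery instance constructed from a graph `G` on `N ≥ 2`
vertices and `1 ≤ k ≤ N`, for any selection `x_{i_1}, …, x_{i_k}` of `k` vertices (given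
by a strictly increasing `σ : Fin k → Fin N`), the minimum — over all votes `u` with
`rank(p,u) = k+1` whose top-`k` candidates are exactly `c_{i_1}, …, c_{i_k}` — of the
total cost of the pairs discordant between `w` and `u` equals
`(N−k)·N² + k·N − |{(h,j) : h < j, x_{i_h} x_{i_j} ∈ E(G)}|`. -/
theorem min_bribery_cost_of_selection
    {N k : ℕ} (hN : 2 ≤ N) (hk1 : 1 ≤ k) (hkN : k ≤ N)
    (G : SimpleGraph (Fin N)) [DecidableRel G.Adj]
    (σ : Fin k → Fin N) (hσ : StrictMono σ) :
    IsLeast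
      { t : ℕ | ∃ u : Vote (BriberyCand N k) ((k + 1) + (N + 1)),
          rankOf u BriberyCand.p = k + 1 ∧
          (∀ c : BriberyCand N k,
            rankOf u c ≤ k ↔ ∃ j : Fin k, c = BriberyCand.c (σ j)) ∧
          t = ∑ q ∈ discordantPairs (briberyVote N k) u, briberyCost G k q.1 q.2 }
      ((N - k) * N ^ 2 + k * N -
        ((Finset.univ : Finset (Fin k × Fin k)).filter
          fun q => q.1 < q.2 ∧ G.Adj (σ q.1) (σ q.2)).card) := by
  have hS : ∀ i : Fin N, i ∈ univ.image σ ↔ ∃ j, i = σ j := by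
    intro i; simp [eq_comm]
  rw [← opt_arith G hkN σ hσ]
  constructor
  · let key : BriberyCand N k → ℕ := fun c => match c with
      | Sum.inl d => N + 1 + d
      | Sum.inr (Sum.inl i) => if i ∈ univ.image σ then i else N + k + 2 + i
      | Sum.inr (Sum.inr _) => N
    have hkd : ∀ d, key (Sum.inl d) = N + 1 + d := fun _ => rfl
    have hkc : ∀ i, key (Sum.inr (Sum.inl i)) =
      if i ∈ univ.image σ then (i : ℕ) else N + k + 2 + i := fun _ => rfl
    have hkp : ∀ x, key (Sum.inr (Sum.inr x)) = N := fun _ => rfl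
    clear_value key
    have hinj : Function.Injective key := by
      rintro (d | i | x) (d' | i' | x') h <;>
        simp only [hkd, hkc, hkp] at h <;> (try split_ifs at h) <;>
        first
        | (exfalso; omega)
        | (congr 2; omega)
        | (congr 1; omega)
    obtain ⟨u, hu⟩ := exists_vote_of_key (m := (k + 1) + (N + 1))
      (by simp [BriberyCand]) key hinj
    have hlt : ∀ c, u c < u BriberyCand.p ↔ ∃ j : Fin k, c = BriberyCand.c (σ j) := by
      intro c
      rw [hu]
      rcases c with d | i | x
      · simp only [hkd, hkp]; constructor
        · intro h; omega
        · rintro ⟨j, hj⟩; simp at hj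
      · simp only [hkc, hkp]
        simp only [Sum.inr.injEq, Sum.inl.injEq, ← hS]
        split_ifs with h
        · simp only [h, iff_true]; exact i.2
        · simp only [h, iff_false]; omega
      · simp [hkp]
    have hp : (u BriberyCand.p : ℕ) = k := by
      rw [vote_val_eq_card]
      simp only [hlt]
      have : (univ.filter fun c : BriberyCand N k => ∃ j : Fin k, c = BriberyCand.c (σ j)) =
          univ.image (fun j => BriberyCand.c (σ j)) := by
        ext c; simp [eq_comm]
      rw [this, Finset.card_image_of_injective, Finset.card_fin]
      intro a b h
      exact hσ.injective (Sum.inl_injective (Sum.inr_injective h))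
    refine ⟨u, by simp [rankOf, hp], fun c => ?_, ?_⟩
    · rw [← hlt, Fin.lt_def, hp, rankOf]; omega
    · rw [total_cost_eq]
      congr 1
      · congr 1
        · refine Finset.sum_congr rfl fun i _ => ?_
          congr 1
          rw [hu, hkc, hkd]
          split_ifs with h
          · simp only [h, true_iff, eq_iff_iff]; omega
          · simp only [h, false_iff, eq_iff_iff]; simp; omega
        · refine Finset.sum_congr rfl fun i _ => Finset.sum_congr rfl fun j _ => ?_
          congr 1
          rw [hu, hkc, hkc, eq_iff_iff]
          by_cases h1 : i ∈ univ.image σ <;> by_cases h2 : j ∈ univ.image σ <;>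
            simp only [h1, h2, if_true, if_false, not_true, not_false_iff, and_true, and_false,
              false_iff, iff_self_and] <;> rw [Fin.lt_def] <;> omega
      · refine Finset.sum_congr rfl fun i _ => ?_
        congr 1
        rw [hu, hkc, hkp, eq_iff_iff]
        split_ifs with h
        · simp only [h, not_true, false_iff]; omega
        · simp only [h, not_false_iff, true_iff]; omega
  · rintro t ⟨u, hp, hc, rfl⟩
    rw [total_cost_eq]
    have hcS : ∀ i, i ∈ univ.image σ ↔ (u (BriberyCand.c i) : ℕ) < k := by
      intro i
      have := hc (BriberyCand.c i)
      simp only [Sum.inr.injEq, Sum.inl.injEq, ← hS, rankOf] at this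
      rw [← this]; omega
    have hd : k ≤ (u (BriberyCand.d 0) : ℕ) := by
      by_contra h
      have := (hc (BriberyCand.d 0)).1 (by unfold rankOf; omega)
      simp at this
    have hpk : (u BriberyCand.p : ℕ) = k := by simpa [rankOf] using hp
    have hne : ∀ i, (u (BriberyCand.c i) : ℕ) ≠ k := by
      intro i h
      have := u.injective (Fin.ext (h.trans hpk.symm))
      simp at this
    have mono : ∀ (P Q : Prop) [Decidable P] [Decidable Q] (a : ℕ), (P → Q) →
        (if P then a else 0) ≤ if Q then a else 0 := by
      intro P Q _ _ a h
      by_cases hP : P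
      · rw [if_pos hP, if_pos (h hP)]
      · rw [if_neg hP]; exact Nat.zero_le _
    refine add_le_add (add_le_add ?_ ?_) ?_
    · refine Finset.sum_le_sum fun i _ => mono _ _ _ fun h => ?_
      rw [hcS] at h; rw [Fin.lt_def]; omega
    · refine Finset.sum_le_sum fun i _ => Finset.sum_le_sum fun j _ => mono _ _ _ fun h => ?_
      rw [hcS, hcS] at h
      refine ⟨h.1, ?_⟩
      rw [Fin.lt_def]; omega
    · refine Finset.sum_le_sum fun i _ => mono _ _ _ fun h => ?_
      rw [hcS] at h
      have := hne i
      rw [Fin.lt_def]; omega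
end

section
/- Let G be an undirected graph on vertices x_1,…,x_N with N ≥ 2 and let 1 ≤ k ≤ N; construct the single-vote Swap Bribery instance (C, w, cost) as described, and set the budget β = (N−k)·N² + k·N − k(k−1)/2. Then there exists a vote u on C with rank(p,u) ≤ k+1 such that the total cost Σ cost({a,b}), taken over all pairs {a,b} discordant between w and u, is at most β, if and only if G contains a clique of size k. (Equivalently: the constructed Swap Bribery instance for (k+1)-approval with the single vote w, preferred candidate p and budget β has a solution if and only if G has a k-clique.) -/
open Finset

/-- Number of back-neighbours. -/
def backDeg {N : ℕ} (G : SimpleGraph (Fin N)) [DecidableRel G.Adj] (i : Fin N) : ℕ :=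
  (Finset.univ.filter fun j => j < i ∧ G.Adj j i).card

lemma sum_lt_card {N : ℕ} (A : Finset (Fin N)) :
    ∑ i ∈ A, (A.filter fun j => j < i).card = A.card * (A.card - 1) / 2 := by
  rw [← Nat.choose_two_right]
  induction A using Finset.induction_on_max with
  | empty => simp
  | insert a s ha ih =>
    have hn : a ∉ s := fun h => lt_irrefl _ (ha a h)
    rw [Finset.sum_insert hn, Finset.card_insert_of_notMem hn]
    have h1 : ((insert a s).filter fun j => j < a) = s := by
      ext j
      simp only [Finset.mem_filter, Finset.mem_insert]
      constructor
      · rintro ⟨rfl | h, h2⟩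
        · exact absurd h2 (lt_irrefl _)
        · exact h
      · exact fun h => ⟨Or.inr h, ha j h⟩
    have h2 : ∑ i ∈ s, ((insert a s).filter fun j => j < i).card
        = ∑ i ∈ s, (s.filter fun j => j < i).card := by
      refine Finset.sum_congr rfl fun i hi => ?_
      rw [Finset.filter_insert, if_neg (not_lt.mpr (ha i hi).le)]
    rw [h1, h2, ih, Nat.choose_succ_succ' s.card 1, Nat.choose_one_right]

lemma backDeg_le {N : ℕ} (G : SimpleGraph (Fin N)) [DecidableRel G.Adj] (i : Fin N) :
    backDeg G i ≤ N := by
  unfold backDeg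
  exact (Finset.card_le_univ _).trans (by simp)

lemma backDeg_split {N : ℕ} (G : SimpleGraph (Fin N)) [DecidableRel G.Adj] (A : Finset (Fin N))
    (i : Fin N) : backDeg G i = (A.filter fun j => j < i ∧ G.Adj j i).card
      + (Finset.univ.filter fun j => j ∉ A ∧ j < i ∧ G.Adj j i).card := by
  unfold backDeg
  rw [← Finset.card_filter_add_card_filter_not (s := Finset.univ.filter fun j => j < i ∧ G.Adj j i)
    (fun j => j ∈ A)]
  congr 1
  · congr 1; ext j; simp; tauto
  · congr 1; ext j; simp; tauto

lemma cost_formula {N k : ℕ} (G : SimpleGraph (Fin N)) [DecidableRel G.Adj]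
    (u : Vote (BriberyCand N k) ((k + 1) + (N + 1))) :
    ∑ q ∈ discordantPairs (briberyVote N k) u, briberyCost G k q.1 q.2 =
      (∑ i : Fin N, (Finset.univ.filter fun j : Fin N => (j < i ∧ G.Adj j i) ∧
          u (BriberyCand.c i) < u (BriberyCand.c j)).card)
      + (∑ i : Fin N, if u (BriberyCand.c i) < u (BriberyCand.d 0) then N - backDeg G i else 0)
      + ∑ i : Fin N, if u BriberyCand.p < u (BriberyCand.c i) then N ^ 2 else 0 := by
  have hdd : ∀ i j, briberyCost G k (Sum.inl i) (Sum.inl j) = 0 := fun i j => rfl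
  have hdp : ∀ i j, briberyCost G k (Sum.inl i) (Sum.inr (Sum.inr j)) = 0 := fun i j => rfl
  have hpd : ∀ i j, briberyCost G k (Sum.inr (Sum.inr j)) (Sum.inl i) = 0 := fun i j => rfl
  have hpp : ∀ i j, briberyCost G k (Sum.inr (Sum.inr j)) (Sum.inr (Sum.inr i)) = 0 :=
    fun i j => rfl
  have hcc : ∀ i j, briberyCost G k (Sum.inr (Sum.inl i)) (Sum.inr (Sum.inl j))
    = if G.Adj i j then 1 else 0 := fun i j => rfl
  have hdc : ∀ d i, briberyCost G k (Sum.inl d) (Sum.inr (Sum.inl i))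
    = if d = 0 then N - backDeg G i else 0 := fun i j => rfl
  have hcp : ∀ i j, briberyCost G k (Sum.inr (Sum.inl i)) (Sum.inr (Sum.inr j))
    = N ^ 2 := fun i j => rfl
  have w1 : ∀ d i, briberyVote N k (Sum.inl d) < briberyVote N k (Sum.inr (Sum.inl i)) := by
    intro d i
    simp [briberyVote, Fin.lt_def]; omega
  have w1' : ∀ d i, ¬ briberyVote N k (Sum.inr (Sum.inl i)) < briberyVote N k (Sum.inl d) :=
    fun d i => not_lt.mpr (w1 d i).le
  have w2 : ∀ i j, briberyVote N k (Sum.inr (Sum.inl i)) < briberyVote N k (Sum.inr (Sum.inr j)) := by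
    intro d i
    simp [briberyVote, Fin.lt_def]
  have w2' : ∀ i j, ¬ briberyVote N k (Sum.inr (Sum.inr j)) < briberyVote N k (Sum.inr (Sum.inl i)) :=
    fun d i => not_lt.mpr (w2 d i).le
  have w3 : ∀ i j, briberyVote N k (Sum.inr (Sum.inl i)) < briberyVote N k (Sum.inr (Sum.inl j))
      ↔ i < j := by
    intro d i
    simp [briberyVote]
    exact Iff.rfl
  unfold discordantPairs
  rw [Finset.sum_filter, Fintype.sum_prod_type]
  simp only [Fintype.sum_sum_type, hdd, hdp, hpd, hpp, hcc, hdc, hcp, w1, w1', w2, w2', w3,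
    true_and, false_and, if_false, ite_self, Finset.sum_const_zero, zero_add, add_zero,
    Finset.sum_add_distrib]
  rw [Finset.sum_comm]
  have e1 : ∀ i : Fin N, (∑ d : Fin (k+1), if u (Sum.inr (Sum.inl i)) < u (Sum.inl d) then
      (if d = 0 then N - backDeg G i else 0) else 0)
      = if u (BriberyCand.c i) < u (BriberyCand.d 0) then N - backDeg G i else 0 := by
    intro i
    rw [Finset.sum_eq_single 0]
    · simp
    · intro b _ hb; simp [hb]
    · simp
  simp only [e1]
  have e2 : (∑ x : Fin N, ∑ y : Fin N, if x < y ∧ u (Sum.inr (Sum.inl y)) < u (Sum.inr (Sum.inl x))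
      then (if G.Adj x y then 1 else 0) else 0) =
      (∑ i : Fin N, (Finset.univ.filter fun j : Fin N => (j < i ∧ G.Adj j i) ∧
          u (BriberyCand.c i) < u (BriberyCand.c j)).card) := by
    rw [Finset.sum_comm]
    refine Finset.sum_congr rfl fun i _ => ?_
    rw [Finset.card_filter]
    refine Finset.sum_congr rfl fun j _ => ?_
    rw [← ite_and]
    refine if_congr ?_ rfl rfl
    tauto
  rw [e2]
  simp
  ring

lemma card_above {C : Type*} [Fintype C] {m : ℕ} (u : Vote C m) (p : C) :
    (Finset.univ.filter fun x => u x < u p).card = (u p : ℕ) := by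
  rw [← Fin.card_Iio (u p)]
  rw [← Finset.card_map u.toEmbedding]
  congr 1
  ext x
  simp only [Finset.mem_map, Finset.mem_filter, Finset.mem_univ, true_and, Finset.mem_Iio]
  constructor
  · rintro ⟨a, h, rfl⟩; exact h
  · intro h; exact ⟨u.symm x, by simpa using h, by simp⟩

lemma exists_vote {C : Type*} [Fintype C] {m : ℕ} (hm : Fintype.card C = m) (f : C → ℕ)
    (hf : Function.Injective f) : ∃ u : Vote C m, ∀ a b, u a < u b ↔ f a < f b := by
  let _ : LinearOrder C := LinearOrder.lift' f hf
  let e := Fintype.orderIsoFinOfCardEq C hm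
  refine ⟨e.symm.toEquiv, fun a b => ?_⟩
  exact e.symm.lt_iff_lt

lemma budget_aux {N k : ℕ} (hN : 2 ≤ N) (hk1 : 1 ≤ k) (hkN : k ≤ N) :
    k * N - k * (k - 1) / 2 < N ^ 2 := by
  have h1 : k * N ≤ N * N := Nat.mul_le_mul_right _ hkN
  rcases hkN.lt_or_eq with h | h
  · have : k * N < N * N := Nat.mul_lt_mul_of_pos_right h (by omega)
    rw [pow_two]; omega
  · subst h
    obtain ⟨n, rfl⟩ : ∃ n, k = n + 2 := ⟨k - 2, by omega⟩
    have : 2 ≤ (n + 2) * (n + 2 - 1) := by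
      have : n + 2 - 1 = n + 1 := by omega
      rw [this]; nlinarith
    have h3 : 1 ≤ (n + 2) * (n + 2 - 1) / 2 := by omega
    have h4 : 0 < (n + 2) * (n + 2) := by positivity
    rw [pow_two]; omega

lemma half_le {N k : ℕ} (hkN : k ≤ N) : k * (k - 1) / 2 ≤ k * N := by
  have : k * (k - 1) ≤ k * N := Nat.mul_le_mul_left _ (by omega)
  omega

/-- In the Swap Bribery instance constructed from a graph `G` on `N ≥ 2`
vertices and `1 ≤ k ≤ N`, with budget `β = (N−k)·N² + k·N − k(k−1)/2`, there is a vote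
`u` with `rank(p,u) ≤ k+1` (i.e. `p` gets a point under `(k+1)`-approval) whose total
discordance cost with `w` is at most `β`, if and only if `G` contains a clique of size
`k`. -/
theorem bribery_instance_solvable_iff_clique
    {N k : ℕ} (hN : 2 ≤ N) (hk1 : 1 ≤ k) (hkN : k ≤ N)
    (G : SimpleGraph (Fin N)) [DecidableRel G.Adj] :
    (∃ u : Vote (BriberyCand N k) ((k + 1) + (N + 1)),
        rankOf u BriberyCand.p ≤ k + 1 ∧
        ∑ q ∈ discordantPairs (briberyVote N k) u, briberyCost G k q.1 q.2 ≤
          (N - k) * N ^ 2 + k * N - k * (k - 1) / 2) ↔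
    ∃ S : Finset (Fin N), G.IsNClique k S := by
  have hcardc : ∀ A : Finset (Fin N), ∑ i : Fin N, (if i ∈ A then 0 else N ^ 2)
      = (N - A.card) * N ^ 2 := by
    intro A
    have : ∀ i, (if i ∈ A then 0 else N ^ 2) = if i ∈ Aᶜ then N ^ 2 else 0 := by
      intro i; by_cases h : i ∈ A <;> simp [h]
    simp only [this]
    rw [Finset.sum_ite_mem, Finset.univ_inter, Finset.sum_const, Finset.card_compl,
      Fintype.card_fin, smul_eq_mul]
  have hhalf := half_le hkN
  constructor
  · rintro ⟨u, hr, hc⟩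
    rw [cost_formula] at hc
    set A : Finset (Fin N) := Finset.univ.filter fun i =>
      u (BriberyCand.c i) < u BriberyCand.p with hA
    have hmem : ∀ i, i ∈ A ↔ u (BriberyCand.c i) < u BriberyCand.p := by simp [hA]
    have h3 : (∑ i : Fin N, if u BriberyCand.p < u (BriberyCand.c i) then N ^ 2 else 0)
        = (N - A.card) * N ^ 2 := by
      rw [← hcardc]
      refine Finset.sum_congr rfl fun i _ => ?_
      have hne : u (BriberyCand.c i) ≠ u BriberyCand.p := fun h => by simpa using u.injective h
      by_cases hi : i ∈ A
      · rw [if_pos hi, if_neg (not_lt.mpr ((hmem i).1 hi).le)]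
      · rw [if_neg hi, if_pos (lt_of_le_of_ne (not_lt.mp (mt (hmem i).2 hi)) hne.symm)]
    rw [h3] at hc
    have hup : (u BriberyCand.p : ℕ) ≤ k := by simpa [rankOf] using hr
    rw [← card_above] at hup
    let emb : Fin N ↪ BriberyCand N k := ⟨fun i => BriberyCand.c i, fun a b h => by simpa using h⟩
    have hsub : A.map emb ⊆ Finset.univ.filter fun x => u x < u BriberyCand.p := by
      intro x hx
      obtain ⟨i, hi, rfl⟩ := Finset.mem_map.1 hx
      exact Finset.mem_filter.2 ⟨Finset.mem_univ _, (hmem i).1 hi⟩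
    have hAk : A.card ≤ k := by
      have := Finset.card_le_card hsub
      rw [Finset.card_map] at this
      omega
    have hbud := budget_aux hN hk1 hkN
    have hAeq : A.card = k := by
      by_contra hne
      have h : (N - k) + 1 ≤ N - A.card := by omega
      have := Nat.mul_le_mul_right (N ^ 2) h
      rw [add_mul, one_mul] at this
      omega
    have hd0 : u BriberyCand.p < u (BriberyCand.d 0) := by
      have hne : u BriberyCand.p ≠ u (BriberyCand.d 0) := fun h => by simpa using u.injective h
      by_contra hcon
      have hlt := lt_of_le_of_ne (not_lt.mp hcon) hne.symm
      have hs2 : insert (BriberyCand.d 0) (A.map emb) ⊆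
          Finset.univ.filter fun x => u x < u BriberyCand.p := by
        refine Finset.insert_subset ?_ hsub
        simpa using hlt
      have := Finset.card_le_card hs2
      rw [Finset.card_insert_of_notMem (by simp [emb]), Finset.card_map] at this
      omega
    have h2 : ∑ i ∈ A, (N - backDeg G i) ≤
        ∑ i : Fin N, if u (BriberyCand.c i) < u (BriberyCand.d 0) then N - backDeg G i else 0 := by
      rw [← Finset.sum_filter]
      refine Finset.sum_le_sum_of_subset fun i hi => ?_
      simpa using ((hmem i).1 hi).trans hd0
    have h1 : ∑ i ∈ A, (Finset.univ.filter fun j => j ∉ A ∧ j < i ∧ G.Adj j i).card ≤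
        ∑ i : Fin N, (Finset.univ.filter fun j : Fin N => (j < i ∧ G.Adj j i) ∧
          u (BriberyCand.c i) < u (BriberyCand.c j)).card := by
      refine le_trans (Finset.sum_le_sum fun i hi => Finset.card_le_card ?_)
        (Finset.sum_le_sum_of_subset (Finset.subset_univ A))
      intro j hj
      obtain ⟨hj1, hj2⟩ := (Finset.mem_filter.1 hj).2
      refine Finset.mem_filter.2 ⟨Finset.mem_univ _, hj2, ?_⟩
      exact lt_of_lt_of_le ((hmem i).1 hi) (not_lt.mp (mt (hmem j).2 hj1))
    have h4 : ∑ i ∈ A, (N - backDeg G i)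
        + ∑ i ∈ A, (Finset.univ.filter fun j => j ∉ A ∧ j < i ∧ G.Adj j i).card
        + ∑ i ∈ A, (A.filter fun j => j < i ∧ G.Adj j i).card = k * N := by
      rw [← Finset.sum_add_distrib, ← Finset.sum_add_distrib, ← hAeq, ← smul_eq_mul,
        ← Finset.sum_const]
      refine Finset.sum_congr rfl fun i _ => ?_
      have := backDeg_split G A i
      have := backDeg_le G i
      omega
    have h5 : ∑ i ∈ A, (A.filter fun j => j < i).card = k * (k - 1) / 2 := by
      rw [sum_lt_card, hAeq]
    rw [hAeq] at hc
    have h6 : ∑ i ∈ A, (A.filter fun j => j < i).card ≤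
        ∑ i ∈ A, (A.filter fun j => j < i ∧ G.Adj j i).card := by omega
    have h7 : ∀ i ∈ A, (A.filter fun j => j < i ∧ G.Adj j i) ⊆ A.filter fun j => j < i := by
      intro i _ j hj
      simp only [Finset.mem_filter] at hj ⊢
      exact ⟨hj.1, hj.2.1⟩
    have h8 := (Finset.sum_eq_sum_iff_of_le fun i hi => Finset.card_le_card (h7 i hi)).1
      (le_antisymm (Finset.sum_le_sum fun i hi => Finset.card_le_card (h7 i hi)) h6)
    have h9 : ∀ i ∈ A, ∀ j ∈ A, j < i → G.Adj j i := by
      intro i hi j hj hji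
      have := Finset.eq_of_subset_of_card_le (h7 i hi) (h8 i hi).ge
      have hm : j ∈ A.filter fun j => j < i := by simp [hj, hji]
      rw [← this] at hm
      exact (Finset.mem_filter.1 hm).2.2
    refine ⟨A, ?_, hAeq⟩
    intro a ha b hb hab
    rcases lt_or_gt_of_ne hab with h | h
    · exact h9 b hb a ha h
    · exact (h9 a ha b hb h).symm
  · rintro ⟨A, hcl, hAk⟩
    let f : BriberyCand N k → ℕ
      | Sum.inl d => N + 1 + d
      | Sum.inr (Sum.inl i) => if i ∈ A then i else N + k + 2 + i
      | Sum.inr (Sum.inr _) => N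
    have fd : ∀ d, f (Sum.inl d) = N + 1 + d := fun _ => rfl
    have fc : ∀ i, f (Sum.inr (Sum.inl i)) = if i ∈ A then (i : ℕ) else N + k + 2 + i := fun _ => rfl
    have fp : ∀ i, f (Sum.inr (Sum.inr i)) = N := fun _ => rfl
    have hf : Function.Injective f := by
      rintro (a | a | a) (b | b | b) h <;> simp only [fd, fc, fp] at h
      · congr 1; ext; omega
      · split_ifs at h <;> omega
      · omega
      · split_ifs at h <;> omega
      · congr 2; ext; split_ifs at h <;> omega
      · split_ifs at h <;> omega
      · omega
      · split_ifs at h <;> omega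
      · congr 2; exact Subsingleton.elim _ _
    obtain ⟨u, hu⟩ := exists_vote (m := (k + 1) + (N + 1)) (by simp) f hf
    refine ⟨u, ?_, ?_⟩
    · unfold rankOf
      rw [← card_above]
      let emb : Fin N ↪ BriberyCand N k := ⟨fun i => BriberyCand.c i, fun a b h => by simpa using h⟩
      have hsub : (Finset.univ.filter fun x => u x < u BriberyCand.p) ⊆ A.map emb := by
        intro x hx
        have hx := (Finset.mem_filter.1 hx).2
        rw [hu] at hx
        rcases x with a | a | a <;> simp only [fd, fc, fp] at hx
        · omega
        · split_ifs at hx with h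
          · exact Finset.mem_map.2 ⟨a, h, rfl⟩
          · omega
        · omega
      have := Finset.card_le_card hsub
      rw [Finset.card_map] at this
      omega
    · rw [cost_formula]
      have h3 : (∑ i : Fin N, if u BriberyCand.p < u (BriberyCand.c i) then N ^ 2 else 0)
          = (N - k) * N ^ 2 := by
        refine Eq.trans ?_ ((hcardc A).trans (by rw [hAk]))
        refine Finset.sum_congr rfl fun i _ => ?_
        simp only [hu, fp, fc]
        by_cases hi : i ∈ A
        · rw [if_pos hi, if_pos hi, if_neg (by omega)]
        · rw [if_neg hi, if_neg hi, if_pos (by omega)]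
      have h2 : (∑ i : Fin N, if u (BriberyCand.c i) < u (BriberyCand.d 0) then N - backDeg G i
          else 0) = ∑ i ∈ A, (N - backDeg G i) := by
        rw [← Finset.sum_filter]
        refine Finset.sum_congr ?_ fun _ _ => rfl
        ext i
        simp only [hu, fd, fc, Finset.mem_filter, Finset.mem_univ, true_and]
        by_cases hi : i ∈ A
        · simp only [hi, if_true, iff_true]; omega
        · simp only [hi, if_false, iff_false, Fin.val_zero]; omega
      have h1 : ∑ i : Fin N, (Finset.univ.filter fun j : Fin N => (j < i ∧ G.Adj j i) ∧
          u (BriberyCand.c i) < u (BriberyCand.c j)).card =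
          ∑ i ∈ A, (Finset.univ.filter fun j => j ∉ A ∧ j < i ∧ G.Adj j i).card := by
        symm
        rw [← Finset.sum_subset (Finset.subset_univ A)]
        · refine Finset.sum_congr rfl fun i hi => ?_
          congr 1
          ext j
          simp only [hu, fc, Finset.mem_filter, Finset.mem_univ, true_and, Fin.lt_def, hi, if_true]
          by_cases hj : j ∈ A
          · simp only [hj, if_true]
            constructor
            · rintro ⟨h, _⟩; exact absurd trivial h
            · rintro ⟨⟨h, _⟩, h'⟩; omega
          · simp only [hj, if_false, not_false_eq_true, true_and]
            constructor
            · rintro ⟨h, h'⟩; exact ⟨⟨h, h'⟩, by omega⟩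
            · rintro ⟨h, _⟩; exact h
        · intro i _ hi
          rw [Finset.card_eq_zero, Finset.filter_eq_empty_iff]
          rintro j - ⟨⟨h, _⟩, h'⟩
          simp only [hu, fc, hi, if_false] at h'
          rw [Fin.lt_def] at h
          split_ifs at h' <;> omega
      have h4 : ∑ i ∈ A, (N - backDeg G i)
          + ∑ i ∈ A, (Finset.univ.filter fun j => j ∉ A ∧ j < i ∧ G.Adj j i).card
          + ∑ i ∈ A, (A.filter fun j => j < i).card = k * N := by
        rw [← Finset.sum_add_distrib, ← Finset.sum_add_distrib, ← hAk, ← smul_eq_mul,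
          ← Finset.sum_const]
        refine Finset.sum_congr rfl fun i hi => ?_
        have h5 := backDeg_split G A i
        have h6 := backDeg_le G i
        have h7 : (A.filter fun j => j < i ∧ G.Adj j i) = A.filter fun j => j < i := by
          refine Finset.filter_congr fun j hj => ⟨fun h => h.1, fun h => ⟨h, ?_⟩⟩
          exact hcl hj hi h.ne
        rw [h7] at h5
        omega
      rw [sum_lt_card, hAk] at h4
      rw [h1, h2, h3]
      omega
end

section
/- Let v_1,…,v_n be votes on a finite set of m candidates, let 1 ≤ k ≤ m, and let u_1,…,u_n be votes such that for each i the number of pairs discordant between v_i and u_i is at most β_i, where Σ_i β_i ≤ β. Then every candidate whose total k-approval score in (u_1,…,u_n) differs from its total k-approval score in (v_1,…,v_n) belongs to the set ∪_{i=1}^{n} {c : k − β + 1 ≤ rank(c,v_i) ≤ k + β}; in particular, at most 2βn candidates can have a different total score after the bribery. -/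
open Finset

theorem pos_le_add_discordant {C : Type*} [Fintype C] [DecidableEq C] {m : ℕ}
    (v u : Vote C m) (c : C) :
    (u c : ℕ) ≤ (v c : ℕ) + (discordantPairs v u).card := by
  have cnt : ∀ w : Vote C m, (Finset.univ.filter fun d => w d < w c).card = (w c : ℕ) := by
    intro w
    rw [← Fin.card_Iio (w c)]
    refine Finset.card_bij (fun d _ => w d) ?_ ?_ ?_
    · intro d hd
      simpa using hd
    · intro a _ b _ h
      exact w.injective h
    · intro x hx
      exact ⟨w.symm x, by simpa using hx, by simp⟩
  rw [← cnt u, ← cnt v]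
  have hsub : (Finset.univ.filter fun d => u d < u c) ⊆
      (Finset.univ.filter fun d => v d < v c) ∪ (discordantPairs v u).image Prod.snd := by
    intro d hd
    simp only [Finset.mem_filter, Finset.mem_univ, true_and] at hd
    rw [Finset.mem_union]
    rcases lt_trichotomy (v d) (v c) with h | h | h
    · left
      simpa using h
    · have := v.injective h
      subst this
      exact absurd hd (lt_irrefl _)
    · right
      rw [Finset.mem_image]
      exact ⟨(c, d), by simp [discordantPairs, h, hd], rfl⟩
  calc _ ≤ _ := Finset.card_le_card hsub
    _ ≤ _ := Finset.card_union_le _ _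
    _ ≤ _ := Nat.add_le_add_left Finset.card_image_le _

theorem discordant_card_comm {C : Type*} [Fintype C] [DecidableEq C] {m : ℕ}
    (v u : Vote C m) : (discordantPairs u v).card ≤ (discordantPairs v u).card := by
  refine Finset.card_le_card_of_injOn Prod.swap ?_ (Prod.swap_injective.injOn)
  intro p hp
  simp only [discordantPairs, Finset.coe_filter, Set.mem_setOf_eq, Finset.mem_univ,
    true_and] at hp ⊢
  exact ⟨hp.2, hp.1⟩

/-- Let `v_1, …, v_n` and `u_1, …, u_n` be votes on `m` candidates with
`1 ≤ k ≤ m`, such that the number of pairs discordant between `v_i` and `u_i` is at most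
`β_i` with `Σ_i β_i ≤ β`. Then every candidate whose total `k`-approval score changes
belongs to `∪_i {c : k − β + 1 ≤ rank(c,v_i) ≤ k + β}`; in particular at most `2βn`
candidates can have a different total score after the bribery. -/
theorem changed_score_candidates_localized
    {C : Type*} [Fintype C] [DecidableEq C] {m k n β : ℕ}
    (v u : Fin n → Vote C m) (βi : Fin n → ℕ)
    (hdis : ∀ i, (discordantPairs (v i) (u i)).card ≤ βi i)
    (hsum : ∑ i, βi i ≤ β) (hk1 : 1 ≤ k) (hkm : k ≤ m) :
    (∀ c : C,
      (Finset.univ.filter fun i => rankOf (u i) c ≤ k).card ≠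
          (Finset.univ.filter fun i => rankOf (v i) c ≤ k).card →
        ∃ i : Fin n, (k : ℤ) - (β : ℤ) + 1 ≤ (rankOf (v i) c : ℤ) ∧
          (rankOf (v i) c : ℤ) ≤ (k : ℤ) + (β : ℤ)) ∧
    (Finset.univ.filter fun c : C =>
        (Finset.univ.filter fun i => rankOf (u i) c ≤ k).card ≠
          (Finset.univ.filter fun i => rankOf (v i) c ≤ k).card).card ≤ 2 * β * n := by
  have key : ∀ c : C,
      (Finset.univ.filter fun i => rankOf (u i) c ≤ k).card ≠
          (Finset.univ.filter fun i => rankOf (v i) c ≤ k).card →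
        ∃ i : Fin n, (k : ℤ) - (β : ℤ) + 1 ≤ (rankOf (v i) c : ℤ) ∧
          (rankOf (v i) c : ℤ) ≤ (k : ℤ) + (β : ℤ) := by
    intro c hc
    have hex : ∃ i, ¬ (rankOf (u i) c ≤ k ↔ rankOf (v i) c ≤ k) := by
      by_contra hcon
      push Not at hcon
      apply hc
      congr 1
      exact Finset.filter_congr fun i _ => hcon i
    obtain ⟨i, hi⟩ := hex
    refine ⟨i, ?_⟩
    have hb : βi i ≤ ∑ j, βi j :=
      Finset.single_le_sum (f := βi) (fun _ _ => Nat.zero_le _) (Finset.mem_univ i)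
    have h1 := pos_le_add_discordant (v i) (u i) c
    have h2 := pos_le_add_discordant (u i) (v i) c
    have h3 := discordant_card_comm (v i) (u i)
    have h4 := hdis i
    unfold rankOf at *
    omega
  refine ⟨key, ?_⟩
  have hsub : (Finset.univ.filter fun c : C =>
        (Finset.univ.filter fun i => rankOf (u i) c ≤ k).card ≠
          (Finset.univ.filter fun i => rankOf (v i) c ≤ k).card) ⊆
      (Finset.univ : Finset (Fin n)).biUnion fun i => Finset.univ.filter fun c : C =>
        (k : ℤ) - (β : ℤ) + 1 ≤ (rankOf (v i) c : ℤ) ∧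
          (rankOf (v i) c : ℤ) ≤ (k : ℤ) + (β : ℤ) := by
    intro c hc
    obtain ⟨i, hi⟩ := key c (Finset.mem_filter.mp hc).2
    exact Finset.mem_biUnion.mpr ⟨i, Finset.mem_univ _, Finset.mem_filter.mpr ⟨Finset.mem_univ _, hi⟩⟩
  refine (Finset.card_le_card hsub).trans ?_
  refine (Finset.card_biUnion_le_card_mul _ _ (2 * β) ?_).trans ?_
  · intro i _
    have hcard : (Finset.Icc ((k : ℤ) - β + 1) (k + β)).card = 2 * β := by
      rw [Int.card_Icc]
      omega
    rw [← hcard]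
    refine Finset.card_le_card_of_injOn (fun c => (rankOf (v i) c : ℤ)) ?_ ?_
    · intro c hc
      simpa using hc
    · intro a _ b _ h
      apply (v i).injective
      apply Fin.ext
      simp only [rankOf] at h
      omega
  · simp [mul_comm]
end

section
/- Let (P_1,…,P_n) be a successful election pattern, let u_1,…,u_n be votes on a finite candidate set C with top-k sets T_i = {c : rank(c,u_i) ≤ k}, let p ∈ C, and let α : C → {1,…,nk} be a coloring such that α(c) = 1 if and only if c = p. Suppose that for every i the restriction of α to T_i is injective and α(T_i) = P_i. Then for every candidate c we have |{i : c ∈ T_i}| ≤ |{i : α(c) ∈ P_i}| ≤ |{i : 1 ∈ P_i}| = |{i : p ∈ T_i}|; hence p is a k-approval winner of (u_1,…,u_n). -/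
open Finset

/-- The set of top-`k` candidates of a vote `v`, i.e. `{c : rank(c,v) ≤ k}` — exactly
the candidates receiving a point from `v` under `k`-approval. -/
def topSet {C : Type*} [Fintype C] [DecidableEq C] {m : ℕ} (k : ℕ) (v : Vote C m) :
    Finset C :=
  Finset.univ.filter fun c => rankOf v c ≤ k

/-- Let `(P_1, …, P_n)` be a successful election pattern, let
`u_1, …, u_n` be votes with top-`k` sets `T_i`, and let `α : C → {1, …, nk}` be a
coloring with `α(c) = 1` iff `c = p`, injective on each `T_i` with `α(T_i) = P_i`.
Then for every candidate `c`,
`|{i : c ∈ T_i}| ≤ |{i : α(c) ∈ P_i}| ≤ |{i : 1 ∈ P_i}| = |{i : p ∈ T_i}|`;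
hence `p` is a `k`-approval winner of `(u_1, …, u_n)`. -/
theorem nice_coloring_yields_winner
    {C : Type*} [Fintype C] [DecidableEq C] {m n k : ℕ}
    (P : Fin n → Finset ℕ)
    (hPsub : ∀ i, P i ⊆ Finset.Icc 1 (n * k))
    (hPcard : ∀ i, (P i).card = k)
    (hsucc : ∀ e ∈ Finset.Icc 1 (n * k),
      (Finset.univ.filter fun i => e ∈ P i).card ≤
        (Finset.univ.filter fun i => (1 : ℕ) ∈ P i).card)
    (u : Fin n → Vote C m) (p : C)
    (α : C → ℕ) (hαrange : ∀ c, α c ∈ Finset.Icc 1 (n * k))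
    (hα1 : ∀ c, α c = 1 ↔ c = p)
    (hinj : ∀ i, Set.InjOn α ↑(topSet k (u i)))
    (himg : ∀ i, (topSet k (u i)).image α = P i) :
    (∀ c : C,
      (Finset.univ.filter fun i => c ∈ topSet k (u i)).card ≤
          (Finset.univ.filter fun i => α c ∈ P i).card ∧
        (Finset.univ.filter fun i => α c ∈ P i).card ≤
          (Finset.univ.filter fun i => (1 : ℕ) ∈ P i).card ∧
        (Finset.univ.filter fun i => (1 : ℕ) ∈ P i).card =
          (Finset.univ.filter fun i => p ∈ topSet k (u i)).card) ∧
    ∀ c : C,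
      (Finset.univ.filter fun i => c ∈ topSet k (u i)).card ≤
        (Finset.univ.filter fun i => p ∈ topSet k (u i)).card := by
  have hmem : ∀ c i, c ∈ topSet k (u i) → α c ∈ P i := by
    intro c i hc
    rw [← himg i]
    exact Finset.mem_image_of_mem α hc
  have hp : ∀ i, (1 : ℕ) ∈ P i ↔ p ∈ topSet k (u i) := by
    intro i
    constructor
    · intro h
      rw [← himg i] at h
      obtain ⟨c, hc, h1⟩ := Finset.mem_image.mp h
      rwa [(hα1 c).mp h1] at hc
    · intro h
      have h2 := hmem p i h
      rwa [(hα1 p).mpr rfl] at h2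
  have key : ∀ c : C,
      (Finset.univ.filter fun i => c ∈ topSet k (u i)).card ≤
          (Finset.univ.filter fun i => α c ∈ P i).card ∧
        (Finset.univ.filter fun i => α c ∈ P i).card ≤
          (Finset.univ.filter fun i => (1 : ℕ) ∈ P i).card ∧
        (Finset.univ.filter fun i => (1 : ℕ) ∈ P i).card =
          (Finset.univ.filter fun i => p ∈ topSet k (u i)).card := by
    intro c
    refine ⟨?_, hsucc _ (hαrange c), ?_⟩
    · apply Finset.card_le_card
      intro i hi
      rw [Finset.mem_filter] at hi ⊢
      exact ⟨hi.1, hmem c i hi.2⟩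
    · congr 1
      ext i
      rw [Finset.mem_filter, Finset.mem_filter, hp i]
  refine ⟨key, fun c => ?_⟩
  obtain ⟨h1, h2, h3⟩ := key c
  exact (h1.trans h2).trans h3.le
end
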